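/- Let g ∈ L¹(ℝⁿ), g not a.e. zero, and 1 < s < ∞. Then W(x) = (Mg(x))^{1/s} belongs to RH_q for every 1 < q < s, where M is the Hardy–Littlewood maximal function. -/

import Mathlib

open MeasureTheory Metric ENNReal

/-- The uncentered Hardy–Littlewood maximal function, with values in `ℝ≥0∞`:
`Mg(x) = sup over balls B containing x of ⨍_B |g|`. -/
noncomputable def maximalFn {X : Type*} [MetricSpace X] [MeasurableSpace X]
    (μ : Measure X) (g : X → ℝ) (x : X) : ℝ≥0∞ :=
  ⨆ (c : X) (r : ℝ) (_ : x ∈ ball c r),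
    (μ (ball c r))⁻¹ * ∫⁻ y in ball c r, ‖g y‖₊ ∂μ

/-!
The function `Mg ^ d` satisfies the Coifman–Rochberg `A₁` estimate
`⨍_B (Mg) ^ d ≤ C (Mg x) ^ d` for all `x ∈ B` and `0 < d < 1`. Indeed, a ball at least as large as
`B` that meets `B` has an average comparable to one over a ball containing `x`, so at heights
`t ≳ Mg x` only small balls, contained in a dilate of `B`, matter. Vitali's covering lemma for these
balls bounds `|B ∩ {Mg > t}|` by `C |B| Mg x / t`, and integrating the distribution function gives
the estimate. With `d = q / s`, taking the `q`-th root and averaging over `x ∈ B` turns the `A₁`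
estimate for `W ^ q` into the reverse Hölder inequality for `W = (Mg) ^ (1 / s)`.
-/

open Set
open scoped NNReal

section WeakType

variable {α : Type*} [MeasurableSpace α] {ν : Measure α} {f : α → ℝ≥0∞}

lemma ae_lt_top_of_mul_measure_lt_le {K : ℝ≥0∞} (hK : K ≠ ∞)
    (h : ∀ t, t * ν {x | t < f x} ≤ K) : ∀ᵐ x ∂ν, f x < ∞ := by
  rw [ae_iff]
  by_contra hpos
  obtain ⟨n, hn⟩ := ENNReal.exists_nat_mul_gt hpos hK
  refine (hn.trans_le ?_).not_ge (h n)
  gcongr with x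
  intro hx
  exact (ENNReal.natCast_lt_top n).trans_le (not_lt.1 hx)

lemma ae_eq_zero_of_measure_lt_eq_zero (h : ∀ t ≠ 0, ν {x | t < f x} = 0) : f =ᵐ[ν] 0 := by
  have hle : ∀ᵐ x ∂ν, ∀ n : ℕ, f x ≤ (n : ℝ≥0∞)⁻¹ := ae_all_iff.2 fun n => by
    simpa only [ae_iff, not_le] using h _ (ENNReal.inv_ne_zero.2 (ENNReal.natCast_ne_top n))
  filter_upwards [hle] with x hx
  exact nonpos_iff_eq_zero.1 (ge_of_tendsto' ENNReal.tendsto_inv_nat_nhds_zero hx)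

lemma lintegral_Ioc_rpow {p b : ℝ} (hp : -1 < p) (hb : 0 ≤ b) :
    ∫⁻ t in Ioc 0 b, ENNReal.ofReal (t ^ p) = ENNReal.ofReal (b ^ (p + 1) / (p + 1)) := by
  rw [← ofReal_integral_eq_lintegral_ofReal, ← intervalIntegral.integral_of_le hb,
    integral_rpow (Or.inl hp), Real.zero_rpow (by linarith), sub_zero]
  · exact (intervalIntegrable_iff_integrableOn_Ioc_of_le hb).1
      (intervalIntegral.intervalIntegrable_rpow' hp)
  · filter_upwards [ae_restrict_mem measurableSet_Ioc] with t ht using Real.rpow_nonneg ht.1.le p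

lemma lintegral_Ioi_rpow {p b : ℝ} (hp : p < -1) (hb : 0 < b) :
    ∫⁻ t in Ioi b, ENNReal.ofReal (t ^ p) = ENNReal.ofReal (-b ^ (p + 1) / (p + 1)) := by
  rw [← ofReal_integral_eq_lintegral_ofReal, integral_Ioi_rpow_of_lt hp hb]
  · exact integrableOn_Ioi_rpow_of_lt hp hb
  · filter_upwards [ae_restrict_mem measurableSet_Ioi] with t ht
      using Real.rpow_nonneg (hb.trans ht).le p

lemma lintegral_ofReal_rpow_le_of_measure_lt_le [IsProbabilityMeasure ν] {u : α → ℝ} {b d : ℝ}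
    (hu : AEMeasurable u ν) (hu0 : 0 ≤ u) (hb : 0 < b) (hd0 : 0 < d) (hd1 : d < 1)
    (h : ∀ t, 0 < t → ν {x | t < u x} ≤ ENNReal.ofReal (b / t)) :
    ∫⁻ x, ENNReal.ofReal (u x ^ d) ∂ν ≤ ENNReal.ofReal (b ^ d / (1 - d)) := by
  have low : ∫⁻ t in Ioc 0 b, ν {x | t < u x} * ENNReal.ofReal (t ^ (d - 1)) ≤
      ENNReal.ofReal (b ^ d / d) :=
    calc
      _ ≤ ∫⁻ t in Ioc 0 b, ENNReal.ofReal (t ^ (d - 1)) :=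
        lintegral_mono fun t => mul_le_of_le_one_left' prob_le_one
      _ = _ := by rw [lintegral_Ioc_rpow (by linarith) hb.le, sub_add_cancel]
  have high : ∫⁻ t in Ioi b, ν {x | t < u x} * ENNReal.ofReal (t ^ (d - 1)) ≤
      ENNReal.ofReal (b ^ d / (1 - d)) :=
    calc
      _ ≤ ∫⁻ t in Ioi b, ENNReal.ofReal b * ENNReal.ofReal (t ^ (d - 2)) := by
        refine setLIntegral_mono (by fun_prop) fun t (ht : b < t) => ?_
        have ht0 : 0 < t := hb.trans ht
        calc
          _ ≤ ENNReal.ofReal (b / t) * ENNReal.ofReal (t ^ (d - 1)) := by gcongr; exact h t ht0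
          _ = _ := by
            rw [← ENNReal.ofReal_mul (by positivity), ← ENNReal.ofReal_mul hb.le,
              show d - 1 = d - 2 + 1 by ring, Real.rpow_add_one ht0.ne']
            field_simp
      _ = _ := by
        rw [lintegral_const_mul _ (by fun_prop), lintegral_Ioi_rpow (by linarith) hb,
          ← ENNReal.ofReal_mul hb.le, show d - 2 + 1 = d - 1 by ring, mul_div_assoc', mul_neg,
          mul_comm b, ← Real.rpow_add_one hb.ne', sub_add_cancel, ← neg_sub 1 d, neg_div_neg_eq]
  have hd1' : 0 < 1 - d := by linarith
  calc
    _ = ENNReal.ofReal d * ∫⁻ t in Ioc 0 b ∪ Ioi b,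
        ν {x | t < u x} * ENNReal.ofReal (t ^ (d - 1)) := by
      rw [Ioc_union_Ioi_eq_Ioi hb.le,
        lintegral_rpow_eq_lintegral_meas_lt_mul ν (Filter.Eventually.of_forall hu0) hu hd0]
    _ ≤ ENNReal.ofReal d * (ENNReal.ofReal (b ^ d / d) + ENNReal.ofReal (b ^ d / (1 - d))) := by
      gcongr
      exact (lintegral_union_le _ _ _).trans (add_le_add low high)
    _ = _ := by
      rw [← ENNReal.ofReal_add (by positivity) (by positivity), ← ENNReal.ofReal_mul hd0.le]
      congr 1
      field_simp
      ring

/-- Kolmogorov's inequality for weak `L¹` functions. -/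
lemma lintegral_rpow_le_of_mul_measure_lt_le [IsProbabilityMeasure ν] {b : ℝ≥0∞} {d : ℝ}
    (hf : AEMeasurable f ν) (hd0 : 0 < d) (hd1 : d < 1) (h : ∀ t, t * ν {x | t < f x} ≤ b) :
    ∫⁻ x, f x ^ d ∂ν ≤ ENNReal.ofReal (1 - d)⁻¹ * b ^ d := by
  rcases eq_or_ne b 0 with rfl | hb0
  · have hf0 : f =ᵐ[ν] 0 := ae_eq_zero_of_measure_lt_eq_zero fun t ht =>
      (mul_eq_zero.1 (nonpos_iff_eq_zero.1 (h t))).resolve_left ht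
    rw [lintegral_congr_ae (g := 0) (hf0.mono fun x hx => by simp [hx, hd0])]
    simp
  rcases eq_or_ne b ∞ with rfl | hb
  · simp [hd0, hd1]
  lift b to ℝ≥0 using hb
  have hbpos : 0 < (b : ℝ) := by exact_mod_cast pos_iff_ne_zero.2 hb0
  calc
    ∫⁻ x, f x ^ d ∂ν = ∫⁻ x, ENNReal.ofReal ((f x).toReal ^ d) ∂ν := by
      refine lintegral_congr_ae ?_
      filter_upwards [ae_lt_top_of_mul_measure_lt_le ENNReal.coe_ne_top h] with x hx
      rw [← ENNReal.ofReal_rpow_of_nonneg ENNReal.toReal_nonneg hd0.le,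
        ENNReal.ofReal_toReal hx.ne]
    _ ≤ ENNReal.ofReal ((b : ℝ) ^ d / (1 - d)) := by
      refine lintegral_ofReal_rpow_le_of_measure_lt_le hf.ennreal_toReal
        (fun _ => ENNReal.toReal_nonneg) hbpos hd0 hd1 fun t ht => ?_
      rw [ENNReal.ofReal_div_of_pos ht, ENNReal.ofReal_coe_nnreal,
        ENNReal.le_div_iff_mul_le (by simp [ht]) (by simp), mul_comm]
      refine le_trans ?_ (h (ENNReal.ofReal t))
      gcongr with x
      intro hx
      exact ((ENNReal.ofReal_lt_ofReal_iff_of_nonneg ht.le).2 hx).trans_le ENNReal.ofReal_toReal_le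
    _ = _ := by
      rw [div_eq_inv_mul, ENNReal.ofReal_mul (inv_nonneg.2 (sub_nonneg.2 hd1.le)),
        ← ENNReal.ofReal_rpow_of_pos hbpos, ENNReal.ofReal_coe_nnreal]

/-- The passage from the `A₁` estimate for `f ^ q` to the reverse Hölder inequality for `f`. -/
lemma laverage_rpow_rpow_le_mul_laverage [IsFiniteMeasure ν] [NeZero ν] {K : ℝ≥0∞} {q : ℝ}
    (hK : K ≠ ∞) (hq : 0 < q) (h : ∀ᵐ x ∂ν, ⨍⁻ y, f y ^ q ∂ν ≤ K * f x ^ q) :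
    (⨍⁻ x, f x ^ q ∂ν) ^ (1 / q) ≤ K ^ (1 / q) * ⨍⁻ x, f x ∂ν := by
  have hroot : ∀ᵐ x ∂ν, (⨍⁻ y, f y ^ q ∂ν) ^ (1 / q) ≤ K ^ (1 / q) * f x := by
    filter_upwards [h] with x hx
    rw [one_div, ENNReal.rpow_inv_le_iff hq, ENNReal.mul_rpow_of_nonneg _ _ hq.le,
      ENNReal.rpow_inv_rpow hq.ne']
    exact hx
  calc
    _ = ⨍⁻ _, (⨍⁻ y, f y ^ q ∂ν) ^ (1 / q) ∂ν := (laverage_const ν _).symm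
    _ ≤ ⨍⁻ x, K ^ (1 / q) * f x ∂ν := laverage_mono_ae hroot
    _ = _ := lintegral_const_mul' _ _ (ENNReal.rpow_ne_top_of_nonneg (by positivity) hK)

end WeakType

section Doubling

variable {X : Type*} [MeasurableSpace X]

/-- `μ` is doubling with constant `A` at all scales (Mathlib's `IsUnifLocDoublingMeasure` is only
about small radii). Balls of nonpositive radius are empty, so they impose no condition. -/
def IsDoublingMeasure [PseudoMetricSpace X] (μ : Measure X) (A : ℝ≥0) : Prop :=
  ∀ x r, μ (ball x (2 * r)) ≤ A * μ (ball x r)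

lemma isDoublingMeasure_addHaar {E : Type*} [NormedAddCommGroup E] [NormedSpace ℝ E]
    [FiniteDimensional ℝ E] [MeasurableSpace E] [BorelSpace E] (μ : Measure E)
    [μ.IsAddHaarMeasure] : IsDoublingMeasure μ (2 ^ Module.finrank ℝ E) := fun x r => by
  rw [Measure.addHaar_ball_mul_of_pos μ x two_pos, ← Measure.addHaar_ball_center μ x,
    ENNReal.ofReal_pow zero_le_two]
  simp

namespace IsDoublingMeasure

section PseudoMetricSpace

variable [PseudoMetricSpace X] {μ : Measure X} {A : ℝ≥0}

lemma measure_ball_two_pow_mul_le (hμ : IsDoublingMeasure μ A) (k : ℕ) (x : X) (r : ℝ) :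
    μ (ball x (2 ^ k * r)) ≤ A ^ k * μ (ball x r) := by
  induction k with
  | zero => simp
  | succ k ih =>
    calc
      _ = μ (ball x (2 * (2 ^ k * r))) := by rw [pow_succ', mul_assoc]
      _ ≤ A * μ (ball x (2 ^ k * r)) := hμ x _
      _ ≤ A * (A ^ k * μ (ball x r)) := by gcongr
      _ = _ := by rw [pow_succ', mul_assoc]

lemma measure_ball_four_mul_le (hμ : IsDoublingMeasure μ A) (x : X) (r : ℝ) :
    μ (ball x (4 * r)) ≤ A ^ 2 * μ (ball x r) := by
  convert hμ.measure_ball_two_pow_mul_le 2 x r using 3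
  norm_num

lemma measure_ball_lt_top [IsLocallyFiniteMeasure μ] (hμ : IsDoublingMeasure μ A) (x : X)
    (r : ℝ) : μ (ball x r) < ∞ := by
  obtain ⟨ε, hε, hfin⟩ := (μ.finiteAt_nhds x).exists_mem_basis nhds_basis_ball
  obtain ⟨k, hk⟩ := pow_unbounded_of_one_lt (r / ε) one_lt_two
  calc
    μ (ball x r) ≤ μ (ball x (2 ^ k * ε)) :=
      measure_mono (ball_subset_ball ((div_lt_iff₀ hε).1 hk).le)
    _ ≤ A ^ k * μ (ball x ε) := hμ.measure_ball_two_pow_mul_le k x ε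
    _ < ∞ := ENNReal.mul_lt_top (by finiteness) hfin

lemma one_le [IsLocallyFiniteMeasure μ] [μ.IsOpenPosMeasure] [Nonempty X]
    (hμ : IsDoublingMeasure μ A) : 1 ≤ A := by
  obtain ⟨x⟩ := ‹Nonempty X›
  have hle : 1 * μ (ball x 1) ≤ A * μ (ball x 1) := by
    rw [one_mul]
    exact (measure_mono (ball_subset_ball (by norm_num))).trans (hμ x 1)
  exact_mod_cast (ENNReal.mul_le_mul_iff_left (measure_ball_pos μ x one_pos).ne'
    (hμ.measure_ball_lt_top x 1).ne).1 hle

lemma mul_measure_biUnion_ball_le [OpensMeasurableSpace X] [TopologicalSpace.SeparableSpace X]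
    (hμ : IsDoublingMeasure μ A) {f : X → ℝ≥0∞} {t : ℝ≥0∞} {F : Set (X × ℝ)} {R : ℝ} {S : Set X}
    (hpos : ∀ p ∈ F, 0 < p.2) (hR : ∀ p ∈ F, p.2 ≤ R) (hS : ∀ p ∈ F, ball p.1 p.2 ⊆ S)
    (hF : ∀ p ∈ F, t * μ (ball p.1 p.2) ≤ ∫⁻ y in ball p.1 p.2, f y ∂μ) :
    t * μ (⋃ p ∈ F, ball p.1 p.2) ≤ A ^ 2 * ∫⁻ y in S, f y ∂μ := by
  obtain ⟨G, hGF, hdisj, hcover⟩ := Vitali.exists_disjoint_subfamily_covering_enlargement_ball F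
    Prod.fst Prod.snd R hR 4 (by norm_num)
  have hG : G.Countable := hdisj.countable_of_isOpen (fun _ _ => isOpen_ball)
    fun p hp => nonempty_ball.2 (hpos p (hGF hp))
  have hsub : ⋃ p ∈ F, ball p.1 p.2 ⊆ ⋃ p ∈ G, ball p.1 (4 * p.2) :=
    iUnion₂_subset fun p hp =>
      let ⟨_, hb, hpb⟩ := hcover p hp
      hpb.trans (subset_biUnion_of_mem (u := fun p : X × ℝ => ball p.1 (4 * p.2)) hb)
  calc
    t * μ (⋃ p ∈ F, ball p.1 p.2) ≤ t * ∑' p : G, μ (ball p.1.1 (4 * p.1.2)) := by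
      gcongr
      exact (measure_mono hsub).trans (measure_biUnion_le μ hG _)
    _ ≤ t * ∑' p : G, A ^ 2 * μ (ball p.1.1 p.1.2) := by
      gcongr
      exact hμ.measure_ball_four_mul_le _ _
    _ = A ^ 2 * ∑' p : G, t * μ (ball p.1.1 p.1.2) := by
      rw [ENNReal.tsum_mul_left, ENNReal.tsum_mul_left, mul_left_comm]
    _ ≤ A ^ 2 * ∑' p : G, ∫⁻ y in ball p.1.1 p.1.2, f y ∂μ := by
      gcongr with p
      exact hF p (hGF p.2)
    _ = A ^ 2 * ∫⁻ y in ⋃ p ∈ G, ball p.1 p.2, f y ∂μ := by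
      rw [lintegral_biUnion hG (fun _ _ => measurableSet_ball) hdisj]
    _ ≤ A ^ 2 * ∫⁻ y in S, f y ∂μ := by
      gcongr
      exact iUnion₂_subset fun p hp => hS p (hGF hp)

end PseudoMetricSpace

end IsDoublingMeasure

end Doubling

section MaximalFunction

variable {X : Type*} [MetricSpace X] [MeasurableSpace X]

lemma lowerSemicontinuous_maximalFn (μ : Measure X) (g : X → ℝ) :
    LowerSemicontinuous (maximalFn μ g) := by
  intro x t ht
  simp only [maximalFn, lt_iSup_iff] at ht ⊢
  obtain ⟨c, r, hx, ht⟩ := ht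
  filter_upwards [isOpen_ball.mem_nhds hx] with y hy using ⟨c, r, hy, ht⟩

lemma measurable_maximalFn [OpensMeasurableSpace X] (μ : Measure X) (g : X → ℝ) :
    Measurable (maximalFn μ g) :=
  (lowerSemicontinuous_maximalFn μ g).measurable

namespace IsDoublingMeasure

variable {μ : Measure X} [IsLocallyFiniteMeasure μ] [μ.IsOpenPosMeasure] {A : ℝ≥0}
  {g : X → ℝ} {c x : X} {r : ℝ} {t : ℝ≥0∞}

lemma maximalFn_le_iff (hμ : IsDoublingMeasure μ A) :
    maximalFn μ g x ≤ t ↔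
      ∀ c r, x ∈ ball c r → ∫⁻ y in ball c r, ‖g y‖ₑ ∂μ ≤ t * μ (ball c r) := by
  simp only [maximalFn, iSup_le_iff]
  refine forall₃_congr fun c r hx => ?_
  rw [mul_comm, ← div_eq_mul_inv, ENNReal.div_le_iff
    (measure_ball_pos μ c (pos_of_mem_ball hx)).ne' (hμ.measure_ball_lt_top c r).ne]
  rfl

lemma setLIntegral_enorm_le_maximalFn_mul (hμ : IsDoublingMeasure μ A) (hx : x ∈ ball c r) :
    ∫⁻ y in ball c r, ‖g y‖ₑ ∂μ ≤ maximalFn μ g x * μ (ball c r) :=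
  hμ.maximalFn_le_iff.1 le_rfl c r hx

lemma lt_maximalFn_iff (hμ : IsDoublingMeasure μ A) :
    t < maximalFn μ g x ↔
      ∃ c r, x ∈ ball c r ∧ t * μ (ball c r) < ∫⁻ y in ball c r, ‖g y‖ₑ ∂μ := by
  rw [← not_le, hμ.maximalFn_le_iff]
  push Not
  rfl

lemma setLIntegral_enorm_ball_four_mul_le (hμ : IsDoublingMeasure μ A)
    (hx : x ∈ ball c (4 * r)) :
    ∫⁻ y in ball c (4 * r), ‖g y‖ₑ ∂μ ≤ A ^ 2 * maximalFn μ g x * μ (ball c r) :=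
  calc
    _ ≤ maximalFn μ g x * μ (ball c (4 * r)) := hμ.setLIntegral_enorm_le_maximalFn_mul hx
    _ ≤ maximalFn μ g x * (A ^ 2 * μ (ball c r)) := by
      gcongr
      exact hμ.measure_ball_four_mul_le c r
    _ = _ := by ring

lemma setLIntegral_enorm_le_of_inter_nonempty (hμ : IsDoublingMeasure μ A) {c' : X} {ρ : ℝ}
    (hx : x ∈ ball c r) (hρ : r ≤ ρ) (hinter : (ball c' ρ ∩ ball c r).Nonempty) :
    ∫⁻ y in ball c' ρ, ‖g y‖ₑ ∂μ ≤ A ^ 2 * maximalFn μ g x * μ (ball c' ρ) := by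
  obtain ⟨z, hz', hz⟩ := hinter
  have hρ0 : 0 < ρ := pos_of_mem_ball hz'
  have hx' : x ∈ ball c' (4 * ρ) := by
    rw [mem_ball] at *
    linarith [dist_triangle4 x c z c', dist_comm c z]
  exact (lintegral_mono_set (ball_subset_ball (by linarith))).trans
    (hμ.setLIntegral_enorm_ball_four_mul_le hx')

variable [OpensMeasurableSpace X] [TopologicalSpace.SeparableSpace X]

theorem mul_measure_lt_maximalFn_le (hμ : IsDoublingMeasure μ A) (g : X → ℝ) (t : ℝ≥0∞) :
    t * μ {x | t < maximalFn μ g x} ≤ A ^ 2 * ∫⁻ y, ‖g y‖ₑ ∂μ := by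
  let F (n : ℕ) : Set (X × ℝ) :=
    {p | 0 < p.2 ∧ p.2 ≤ n ∧ t * μ (ball p.1 p.2) < ∫⁻ y in ball p.1 p.2, ‖g y‖ₑ ∂μ}
  have hcover : {x | t < maximalFn μ g x} ⊆ ⋃ n, ⋃ p ∈ F n, ball p.1 p.2 := fun x hx => by
    obtain ⟨c, r, hxc, hlt⟩ := hμ.lt_maximalFn_iff.1 hx
    obtain ⟨n, hn⟩ := exists_nat_ge r
    exact mem_iUnion.2 ⟨n, mem_biUnion (show (c, r) ∈ F n from ⟨pos_of_mem_ball hxc, hn, hlt⟩) hxc⟩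
  have hmono : Monotone fun n => ⋃ p ∈ F n, ball p.1 p.2 := fun m n hmn =>
    biUnion_subset_biUnion_left fun p hp => ⟨hp.1, hp.2.1.trans (Nat.cast_le.2 hmn), hp.2.2⟩
  calc
    _ ≤ t * μ (⋃ n, ⋃ p ∈ F n, ball p.1 p.2) := by gcongr
    _ = ⨆ n, t * μ (⋃ p ∈ F n, ball p.1 p.2) := by rw [hmono.measure_iUnion, ENNReal.mul_iSup]
    _ ≤ _ := iSup_le fun n => by
      rw [← setLIntegral_univ fun y => ‖g y‖ₑ]
      exact hμ.mul_measure_biUnion_ball_le (fun p hp => hp.1) (fun p hp => hp.2.1)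
        (fun _ _ => subset_univ _) fun p hp => hp.2.2.le

lemma ae_maximalFn_lt_top_of_integrable (hμ : IsDoublingMeasure μ A) (hg : Integrable g μ) :
    ∀ᵐ x ∂μ, maximalFn μ g x < ∞ :=
  ae_lt_top_of_mul_measure_lt_le (ENNReal.mul_ne_top (by finiteness) hg.2.ne)
    (hμ.mul_measure_lt_maximalFn_le g)

lemma mul_measure_ball_inter_lt_maximalFn_le_of_le (hμ : IsDoublingMeasure μ A)
    (hx : x ∈ ball c r) (ht : A ^ 2 * maximalFn μ g x ≤ t) :
    t * μ (ball c r ∩ {y | t < maximalFn μ g y}) ≤ A ^ 4 * maximalFn μ g x * μ (ball c r) := by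
  have hr : 0 < r := pos_of_mem_ball hx
  let F : Set (X × ℝ) := {p | p.2 < r ∧ (ball p.1 p.2 ∩ ball c r).Nonempty ∧
    t * μ (ball p.1 p.2) < ∫⁻ y in ball p.1 p.2, ‖g y‖ₑ ∂μ}
  have hcover : ball c r ∩ {y | t < maximalFn μ g y} ⊆ ⋃ p ∈ F, ball p.1 p.2 := by
    rintro y ⟨hy, hty⟩
    obtain ⟨c', ρ, hyc', hlt⟩ := hμ.lt_maximalFn_iff.1 hty
    have hinter : (ball c' ρ ∩ ball c r).Nonempty := ⟨y, hyc', hy⟩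
    have hρ : ρ < r := by
      by_contra! hρ
      refine hlt.not_ge ((hμ.setLIntegral_enorm_le_of_inter_nonempty hx hρ hinter).trans ?_)
      gcongr
    exact mem_biUnion (show (c', ρ) ∈ F from ⟨hρ, hinter, hlt⟩) hyc'
  have hsub : ∀ p ∈ F, ball p.1 p.2 ⊆ ball c (4 * r) := by
    rintro ⟨c', ρ⟩ ⟨hρ, ⟨z, hz', hz⟩, -⟩ y hy
    rw [mem_ball] at *
    linarith [dist_triangle4 y c' z c, dist_comm c' z]
  calc
    _ ≤ t * μ (⋃ p ∈ F, ball p.1 p.2) := by gcongr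
    _ ≤ A ^ 2 * ∫⁻ y in ball c (4 * r), ‖g y‖ₑ ∂μ :=
      hμ.mul_measure_biUnion_ball_le (fun p hp => pos_of_mem_ball hp.2.1.some_mem.1)
        (fun p hp => hp.1.le) hsub fun p hp => hp.2.2.le
    _ ≤ A ^ 2 * (A ^ 2 * maximalFn μ g x * μ (ball c r)) := by
      gcongr
      exact hμ.setLIntegral_enorm_ball_four_mul_le (ball_subset_ball (by linarith) hx)
    _ = _ := by ring

theorem mul_measure_ball_inter_lt_maximalFn_le (hμ : IsDoublingMeasure μ A) (hx : x ∈ ball c r)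
    (t : ℝ≥0∞) :
    t * μ (ball c r ∩ {y | t < maximalFn μ g y}) ≤ A ^ 4 * maximalFn μ g x * μ (ball c r) := by
  rcases le_total (A ^ 2 * maximalFn μ g x) t with hlarge | hsmall
  · exact hμ.mul_measure_ball_inter_lt_maximalFn_le_of_le hx hlarge
  have : Nonempty X := ⟨x⟩
  have hA : (A : ℝ≥0∞) ^ 2 ≤ A ^ 4 := by
    gcongr
    · exact_mod_cast hμ.one_le
    · norm_num
  gcongr
  · exact hsmall.trans (by gcongr)
  · exact inter_subset_left

/-- The Coifman–Rochberg theorem. -/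
theorem setLAverage_maximalFn_rpow_le (hμ : IsDoublingMeasure μ A) {d : ℝ} (hd0 : 0 < d)
    (hd1 : d < 1) (hx : x ∈ ball c r) :
    ⨍⁻ y in ball c r, maximalFn μ g y ^ d ∂μ ≤
      ENNReal.ofReal ((A ^ 4) ^ d / (1 - d)) * maximalFn μ g x ^ d := by
  have hB0 : μ (ball c r) ≠ 0 := (measure_ball_pos μ c (pos_of_mem_ball hx)).ne'
  have hB : μ (ball c r) ≠ ∞ := (hμ.measure_ball_lt_top c r).ne
  have hprob : IsProbabilityMeasure ((μ (ball c r))⁻¹ • μ.restrict (ball c r)) :=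
    ProbabilityTheory.cond_isProbabilityMeasure_of_finite hB0 hB
  calc
    ⨍⁻ y in ball c r, maximalFn μ g y ^ d ∂μ ≤
        ENNReal.ofReal (1 - d)⁻¹ * (A ^ 4 * maximalFn μ g x) ^ d := by
      rw [setLAverage_eq']
      refine lintegral_rpow_le_of_mul_measure_lt_le (measurable_maximalFn μ g).aemeasurable
        hd0 hd1 fun t => ?_
      rw [Measure.smul_apply, Measure.restrict_apply' measurableSet_ball, inter_comm, smul_eq_mul,
        mul_left_comm, mul_comm, ← div_eq_mul_inv, ENNReal.div_le_iff hB0 hB]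
      exact hμ.mul_measure_ball_inter_lt_maximalFn_le hx t
    _ = _ := by
      rw [ENNReal.mul_rpow_of_nonneg _ _ hd0.le, ← mul_assoc, div_eq_inv_mul,
        ENNReal.ofReal_mul (inv_nonneg.2 (sub_nonneg.2 hd1.le)),
        ← ENNReal.ofReal_rpow_of_nonneg (by positivity) hd0.le,
        ENNReal.ofReal_pow (by positivity), ENNReal.ofReal_coe_nnreal]

theorem setLAverage_maximalFn_reverse_holder (hμ : IsDoublingMeasure μ A) {q s : ℝ} (hq : 0 < q)
    (hqs : q < s) (hr : 0 < r) :
    (⨍⁻ y in ball c r, (maximalFn μ g y ^ (1 / s)) ^ q ∂μ) ^ (1 / q) ≤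
      ENNReal.ofReal ((A ^ 4) ^ (q / s) / (1 - q / s)) ^ (1 / q) *
        ⨍⁻ y in ball c r, maximalFn μ g y ^ (1 / s) ∂μ := by
  have hs : 0 < s := hq.trans hqs
  have : IsFiniteMeasure (μ.restrict (ball c r)) :=
    isFiniteMeasure_restrict.2 (hμ.measure_ball_lt_top c r).ne
  have : NeZero (μ.restrict (ball c r)) :=
    ⟨Measure.restrict_eq_zero.not.2 (measure_ball_pos μ c hr).ne'⟩
  refine laverage_rpow_rpow_le_mul_laverage ENNReal.ofReal_ne_top hq ?_
  simp only [← ENNReal.rpow_mul, one_div_mul_eq_div]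
  filter_upwards [ae_restrict_mem measurableSet_ball] with x hx
  exact hμ.setLAverage_maximalFn_rpow_le (by positivity) ((div_lt_one hs).2 hqs) hx

lemma setLIntegral_ball_maximalFn_rpow_lt_top (hμ : IsDoublingMeasure μ A) {d : ℝ} (hd0 : 0 < d)
    (hd1 : d < 1) (hx : maximalFn μ g x ≠ ∞) (c : X) (r : ℝ) :
    ∫⁻ y in ball c r, maximalFn μ g y ^ d ∂μ < ∞ := by
  obtain ⟨R, hR⟩ := exists_gt (max r (dist x c))
  calc
    _ ≤ ∫⁻ y in ball c R, maximalFn μ g y ^ d ∂μ :=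
      lintegral_mono_set (ball_subset_ball ((le_max_left _ _).trans hR.le))
    _ = μ (ball c R) * ⨍⁻ y in ball c R, maximalFn μ g y ^ d ∂μ :=
      (measure_mul_setLAverage _ (hμ.measure_ball_lt_top c R).ne).symm
    _ ≤ μ (ball c R) * (ENNReal.ofReal ((A ^ 4) ^ d / (1 - d)) * maximalFn μ g x ^ d) := by
      gcongr
      exact hμ.setLAverage_maximalFn_rpow_le hd0 hd1 ((le_max_right _ _).trans_lt hR)
    _ < ∞ := ENNReal.mul_lt_top (hμ.measure_ball_lt_top c R) <|
      ENNReal.mul_lt_top ENNReal.ofReal_lt_top (ENNReal.rpow_lt_top_of_nonneg hd0.le hx)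

end IsDoublingMeasure

theorem maximal_power_rh_q_general [Nonempty X] [OpensMeasurableSpace X]
    [TopologicalSpace.SeparableSpace X] {μ : Measure X} [IsLocallyFiniteMeasure μ]
    [μ.IsOpenPosMeasure] {A : ℝ≥0} (hμ : IsDoublingMeasure μ A) {s q : ℝ} (hs : 1 < s)
    (hq : 0 < q) (hqs : q < s) :
    ∃ C : ℝ, 0 < C ∧ ∀ g : X → ℝ, (∃ x, maximalFn μ g x ≠ ∞) → ∀ (c : X) (r : ℝ), 0 < r →
      (⨍ x in ball c r, ((maximalFn μ g x).toReal ^ (1 / s)) ^ q ∂μ) ^ (1 / q) ≤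
        C * ⨍ x in ball c r, (maximalFn μ g x).toReal ^ (1 / s) ∂μ := by
  have hs0 : 0 < s := one_pos.trans hs
  have hA : 0 < (A : ℝ) := one_pos.trans_le (mod_cast hμ.one_le)
  have hd : 0 < 1 - q / s := sub_pos.2 ((div_lt_one hs0).2 hqs)
  refine ⟨((A ^ 4) ^ (q / s) / (1 - q / s)) ^ (1 / q), by positivity, ?_⟩
  rintro g ⟨x₀, hx₀⟩ c r hr
  have hM : Measurable (maximalFn μ g) := measurable_maximalFn μ g
  have hint : ∫⁻ y in ball c r, maximalFn μ g y ^ (1 / s) ∂μ < ∞ :=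
    hμ.setLIntegral_ball_maximalFn_rpow_lt_top (by positivity) ((div_lt_one hs0).2 hs) hx₀ c r
  have hfin : ∀ᵐ y ∂μ.restrict (ball c r), maximalFn μ g y ^ (1 / s) ≠ ∞ :=
    (ae_lt_top (hM.pow_const _) hint.ne).mono fun _ => LT.lt.ne
  have hRH := ENNReal.toReal_mono
    (ENNReal.mul_ne_top (by finiteness) (setLAverage_lt_top hint.ne).ne)
    (hμ.setLAverage_maximalFn_reverse_holder (g := g) (c := c) hq hqs hr)
  rw [ENNReal.toReal_mul, ← ENNReal.toReal_rpow, ← ENNReal.toReal_rpow,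
    ENNReal.toReal_ofReal (by positivity), toReal_setLAverage (by fun_prop) hfin,
    toReal_setLAverage (by fun_prop)
      (hfin.mono fun _ => ENNReal.rpow_ne_top_of_nonneg hq.le)] at hRH
  simpa only [← ENNReal.toReal_rpow] using hRH

end MaximalFunction

/-- Let `g ∈ L¹(ℝⁿ)`, `g` not a.e. zero, and `1 < s < ∞`.  Then
`W(x) = (Mg(x))^{1/s}` belongs to `RH_q` for every `1 < q < s`. -/
theorem maximal_power_rh_q {n : ℕ} (g : EuclideanSpace ℝ (Fin n) → ℝ)
    (hg : Integrable g volume) (hgne : ¬ (g =ᵐ[volume] 0))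
    (s : ℝ) (hs : 1 < s) :
    ∀ q : ℝ, 1 < q → q < s →
      ∃ C : ℝ, 0 < C ∧ ∀ (c : EuclideanSpace ℝ (Fin n)) (r : ℝ), 0 < r →
        (⨍ x in ball c r, ((maximalFn volume g x).toReal ^ (1/s)) ^ q) ^ (1/q) ≤
          C * ⨍ x in ball c r, (maximalFn volume g x).toReal ^ (1/s) := by
  intro q hq hqs
  have hμ := isDoublingMeasure_addHaar (volume : Measure (EuclideanSpace ℝ (Fin n)))
  obtain ⟨C, hC, hRH⟩ := maximal_power_rh_q_general hμ hs (one_pos.trans hq) hqs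
  exact ⟨C, hC, hRH g ((hμ.ae_maximalFn_lt_top_of_integrable hg).exists.imp fun _ => LT.lt.ne)⟩
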